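/- arXiv:2509.17795 — 3 statements merged into one kernel-verified Lean document; each statement's English description precedes it below -/
import Mathlib

section
/- If u and v are finite label sequences in the sequential stack specification Stack with disjoint value sets and u is matched (every value pushed in u is also popped in u), then the concatenation u·v is in Stack. Consequently, the concatenation of a linearization of a matched history u with a linearization of a history v (on disjoint value sets, where every operation of u precedes every operation of v) is a linearization of the combined history u·v. -/
attribute [local instance] Classical.propDecidable

/-- A stack label: `push x`, `pop (some x)`, or `pop none` (= pop(⊥), popping empty). -/
inductive Label where
  | push : ℕ → Label
  | pop  : Option ℕ → Label
  deriving DecidableEq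

/-- The value carried by a label (`none` for pop(⊥)). -/
def Label.val : Label → Option ℕ
  | .push x => some x
  | .pop v  => v

/-- The set of values occurring in a sequence of labels. -/
def seqVals (u : List Label) : Set ℕ :=
  {x | Label.push x ∈ u ∨ Label.pop (some x) ∈ u}

/-- A label sequence is matched if every pushed value is also popped. -/
def seqMatched (u : List Label) : Prop :=
  ∀ x : ℕ, Label.push x ∈ u → Label.pop (some x) ∈ u

/-- The sequential stack specification, as the least set of label sequences closed
under the rules Rε, R_PushPop, R_Push, R_PopEmpty. -/
inductive Stack : List Label → Prop
  | empty : Stack []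
  | pushPop (x : ℕ) (u v : List Label) :
      Stack (u ++ v) → Disjoint (seqVals u) (seqVals v) → seqMatched u →
      x ∉ seqVals u → x ∉ seqVals v →
      Stack (Label.push x :: (u ++ Label.pop (some x) :: v))
  | push (x : ℕ) (u v : List Label) :
      Stack (u ++ v) → Disjoint (seqVals u) (seqVals v) →
      Label.pop none ∉ v → x ∉ seqVals u → x ∉ seqVals v →
      Stack (u ++ Label.push x :: v)
  | popEmpty (u v : List Label) :
      Stack (u ++ v) → seqMatched u →
      Stack (u ++ Label.pop none :: v)

/-- An operation: a label with a call time and a return time, with call < return. -/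
structure Op where
  label : Label
  call : ℝ
  ret : ℝ
  call_lt_ret : call < ret

/-- The value of an operation. -/
def Op.val (o : Op) : Option ℕ := o.label.val

/-- A history (finite set of operations) is differentiated: each value is pushed by at
most one operation and popped by at most one operation. -/
def Differentiated (h : Finset Op) : Prop :=
  (∀ o1 ∈ h, ∀ o2 ∈ h, ∀ x : ℕ,
      o1.label = Label.push x → o2.label = Label.push x → o1 = o2) ∧
  (∀ o1 ∈ h, ∀ o2 ∈ h, ∀ x : ℕ,
      o1.label = Label.pop (some x) → o2.label = Label.pop (some x) → o1 = o2)

/-- The set of values occurring in a history. -/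
def hVals (h : Finset Op) : Set ℕ :=
  {x | ∃ o ∈ h, o.label = Label.push x ∨ o.label = Label.pop (some x)}

/-- A history is matched if every pushed value is also popped. -/
def HMatched (h : Finset Op) : Prop :=
  ∀ x : ℕ, (∃ o ∈ h, o.label = Label.push x) → ∃ o ∈ h, o.label = Label.pop (some x)

/-- A history has no pop(⊥) operations. -/
def NoPopEmpty (h : Finset Op) : Prop :=
  ∀ o ∈ h, o.label ≠ Label.pop none

/-- `ℓ` is a linearization of the history `h`: it lists (the operations of) `h`
exactly once each, respects precedence (`o1` precedes `o2` iff `o1.ret < o2.call`),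
and its label sequence is in the sequential stack specification. -/
def IsLinearization (h : Finset Op) (ℓ : List Op) : Prop :=
  ℓ.Nodup ∧ (∀ o : Op, o ∈ ℓ ↔ o ∈ h) ∧
  ℓ.Pairwise (fun o1 o2 => ¬ o2.ret < o1.call) ∧
  Stack (ℓ.map Op.label)

/-- A history is linearizable if it admits a linearization. -/
def Linearizable (h : Finset Op) : Prop := ∃ ℓ : List Op, IsLinearization h ℓ

/-- Projection of a history onto a set of (possibly-⊥) values. -/
noncomputable def projOpt (h : Finset Op) (V : Set (Option ℕ)) : Finset Op :=
  h.filter (fun o => o.val ∈ V)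

/-- Projection of a history onto a set of proper values. -/
noncomputable def projVal (h : Finset Op) (V : Set ℕ) : Finset Op :=
  h.filter (fun o => ∃ x ∈ V, o.val = some x)

/-- The history with all operations on value `x` removed. -/
noncomputable def removeVal (h : Finset Op) (x : ℕ) : Finset Op :=
  h.filter (fun o => o.val ≠ some x)

/-- A time point is covered if it lies in the I-segment [push(x).ret, pop(x).call]
of some value `x`. -/
def Covered (h : Finset Op) (t : ℝ) : Prop :=
  ∃ p ∈ h, ∃ q ∈ h, ∃ x : ℕ, p.label = Label.push x ∧ q.label = Label.pop (some x) ∧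
    p.ret ≤ t ∧ t ≤ q.call

/-- A P-segment: a maximal (nonempty) interval of covered points. -/
def IsPSegment (h : Finset Op) (S : Set ℝ) : Prop :=
  S.Nonempty ∧ S.OrdConnected ∧ (∀ t ∈ S, Covered h t) ∧
  ∀ T : Set ℝ, S ⊆ T → T.OrdConnected → (∀ t ∈ T, Covered h t) → T = S

/-- A D-segment (opening): a maximal (nonempty) interval of uncovered points. -/
def IsDSegment (h : Finset Op) (S : Set ℝ) : Prop :=
  S.Nonempty ∧ S.OrdConnected ∧ (∀ t ∈ S, ¬ Covered h t) ∧
  ∀ T : Set ℝ, S ⊆ T → T.OrdConnected → (∀ t ∈ T, ¬ Covered h t) → T = S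

/-- An inner (internal) D-segment: a D-segment with a P-segment before it and a
P-segment after it. -/
def InnerDSegment (h : Finset Op) (ξ : Set ℝ) : Prop :=
  IsDSegment h ξ ∧
  (∃ S : Set ℝ, IsPSegment h S ∧ ∀ s ∈ S, ∀ t ∈ ξ, s < t) ∧
  (∃ S : Set ℝ, IsPSegment h S ∧ ∀ s ∈ S, ∀ t ∈ ξ, t < s)

/-- `x` is minimal in `h`: `x` is pushed in `h` and no push of `h` returns before
`push(x)` is called. -/
def MinimalVal (h : Finset Op) (x : ℕ) : Prop :=
  ∃ px ∈ h, px.label = Label.push x ∧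
    ∀ p ∈ h, (∃ y : ℕ, p.label = Label.push y) → ¬ p.ret < px.call

/-- `x` is maximal in `h`: `x` is popped in `h` and no pop of `h` is called after
`pop(x)` returns. -/
def MaximalVal (h : Finset Op) (x : ℕ) : Prop :=
  ∃ qx ∈ h, qx.label = Label.pop (some x) ∧
    ∀ q ∈ h, (∃ v : Option ℕ, q.label = Label.pop v) → ¬ qx.ret < q.call

/-- A separation of the values of `h` into `L` and `R`: a partition such that no
operation on a value of `R` precedes an operation on a value of `L`. -/
def Separation (h : Finset Op) (L R : Set ℕ) : Prop :=
  L ∪ R = hVals h ∧ Disjoint L R ∧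
  ∀ o1 ∈ h, ∀ o2 ∈ h, ∀ r ∈ R, ∀ l ∈ L,
    o1.val = some r → o2.val = some l → ¬ o1.ret < o2.call

/-- Values of `h` whose I-segment lies (entirely) before the D-segment `ξ`. -/
def segL (h : Finset Op) (ξ : Set ℝ) : Set ℕ :=
  {x | ∃ px ∈ h, ∃ qx ∈ h, px.label = Label.push x ∧ qx.label = Label.pop (some x) ∧
    ∀ t ∈ Set.Icc px.ret qx.call, ∀ s ∈ ξ, t < s}

/-- Values of `h` whose I-segment lies (entirely) after the D-segment `ξ`. -/
def segR (h : Finset Op) (ξ : Set ℝ) : Set ℕ :=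
  {x | ∃ px ∈ h, ∃ qx ∈ h, px.label = Label.push x ∧ qx.label = Label.pop (some x) ∧
    ∀ t ∈ Set.Icc px.ret qx.call, ∀ s ∈ ξ, s < t}

theorem stack_append_aux {u : List Label} (hu : Stack u) : ∀ v : List Label, Stack v →
    Disjoint (seqVals u) (seqVals v) → seqMatched u → Stack (u ++ v) := by
  induction hu with
  | empty => intro v hv _ _; simpa using hv
  | pushPop x a b hab hd hm hxa hxb ih =>
    intro v hv hdis hmat
    rw [Set.disjoint_left] at hdis hd
    have h1 : Stack (a ++ (b ++ v)) := by
      rw [← List.append_assoc]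
      refine ih v hv ?_ ?_
      · rw [Set.disjoint_left]
        intro y hy
        apply hdis
        simp only [seqVals, Set.mem_setOf_eq, List.mem_append, List.mem_cons] at hy ⊢
        tauto
      · intro y hy
        have h2 := hmat y
        simp only [seqVals, Set.mem_setOf_eq, List.mem_append, List.mem_cons, Label.pop.injEq,
          Option.some.injEq, reduceCtorEq, false_or] at h2 hy hxa hxb ⊢
        by_cases hyx : y = x
        · subst hyx; tauto
        · tauto
    have hxv : x ∉ seqVals v := by
      apply hdis
      simp [seqVals]
    have h3 := Stack.pushPop x a (b ++ v) h1 (by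
      rw [Set.disjoint_left]
      intro y hy hy2
      have h4 := @hd y hy
      have h5 := @hdis y
      simp only [seqVals, Set.mem_setOf_eq, List.mem_append, List.mem_cons] at *
      tauto) hm hxa (by
      simp only [seqVals, Set.mem_setOf_eq, List.mem_append] at *
      tauto)
    simpa using h3
  | push x a b hab hd hb hxa hxb ih =>
    intro v hv hdis hmat
    exfalso
    have h2 := hmat x
    simp only [seqVals, Set.mem_setOf_eq, List.mem_append, List.mem_cons, reduceCtorEq,
      false_or, true_or, or_true] at h2 hxa hxb
    tauto
  | popEmpty a b hab hm ih =>
    intro v hv hdis hmat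
    rw [Set.disjoint_left] at hdis
    have h1 : Stack (a ++ (b ++ v)) := by
      rw [← List.append_assoc]
      refine ih v hv ?_ ?_
      · rw [Set.disjoint_left]
        intro y hy
        apply hdis
        simp only [seqVals, Set.mem_setOf_eq, List.mem_append, List.mem_cons] at hy ⊢
        tauto
      · intro y hy
        have h2 := hmat y
        simp only [List.mem_append, List.mem_cons, Label.pop.injEq, reduceCtorEq,
          false_or] at h2 hy ⊢
        tauto
    have h3 := Stack.popEmpty a (b ++ v) h1 hm
    simpa using h3

/-- Concatenation: (1) if `u, v ∈ Stack` have disjoint value sets and `u` is matched,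
then `u ++ v ∈ Stack`; (2) consequently, concatenating a linearization of a matched
history with a linearization of a history on disjoint values, where every operation of
the first precedes every operation of the second, yields a linearization of the
combined history. -/
theorem stack_concatenation :
    (∀ u v : List Label, Stack u → Stack v →
        Disjoint (seqVals u) (seqVals v) → seqMatched u → Stack (u ++ v)) ∧
    (∀ (hu hv : Finset Op) (ℓu ℓv : List Op),
        Differentiated (hu ∪ hv) →
        Disjoint (hVals hu) (hVals hv) → HMatched hu →
        (∀ o1 ∈ hu, ∀ o2 ∈ hv, o1.ret < o2.call) →
        IsLinearization hu ℓu → IsLinearization hv ℓv →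
        IsLinearization (hu ∪ hv) (ℓu ++ ℓv)) := by
  refine ⟨fun u v hu hv => stack_append_aux hu v hv, ?_⟩
  intro hu hv lu lv _ hdis hmat hprec hlu hlv
  obtain ⟨n1, m1, p1, s1⟩ := hlu
  obtain ⟨n2, m2, p2, s2⟩ := hlv
  refine ⟨?_, ?_, ?_, ?_⟩
  · rw [List.nodup_append']
    refine ⟨n1, n2, ?_⟩
    intro o h1 h2
    have h3 := hprec o ((m1 o).1 h1) o ((m2 o).1 h2)
    have h4 := o.call_lt_ret
    linarith
  · intro o
    rw [List.mem_append, Finset.mem_union, m1, m2]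
  · rw [List.pairwise_append]
    refine ⟨p1, p2, ?_⟩
    intro o1 h1 o2 h2
    have h3 := hprec o1 ((m1 o1).1 h1) o2 ((m2 o2).1 h2)
    have h4 := o1.call_lt_ret
    have h5 := o2.call_lt_ret
    linarith
  · rw [List.map_append]
    refine stack_append_aux s1 _ s2 ?_ ?_
    · rw [Set.disjoint_left] at hdis ⊢
      have key : ∀ (h : Finset Op) (l : List Op), (∀ o, o ∈ l ↔ o ∈ h) →
          ∀ y, y ∈ seqVals (l.map Op.label) → y ∈ hVals h := by
        intro h l hl y hy
        simp only [seqVals, Set.mem_setOf_eq, List.mem_map] at hy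
        rcases hy with ⟨o, ho, e⟩ | ⟨o, ho, e⟩
        · exact ⟨o, (hl o).1 ho, Or.inl e⟩
        · exact ⟨o, (hl o).1 ho, Or.inr e⟩
      intro y h1 h2
      exact hdis (key hu lu m1 y h1) (key hv lv m2 y h2)
    · intro x hx
      rw [List.mem_map] at hx ⊢
      obtain ⟨o, ho, e⟩ := hx
      obtain ⟨q, hq, e2⟩ := hmat x ⟨o, (m1 o).1 ho, e⟩
      exact ⟨q, (m1 q).2 hq, e2⟩
end

section
/- A differentiated history h is linearizable with respect to the sequential stack specification if and only if for every set V of values (possibly including the symbol ⊥), the projection h|V is linearizable. -/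
attribute [local instance] Classical.propDecidable

theorem aux_seqVals_filter (p : Label → Bool) (u : List Label) :
    seqVals (u.filter p) ⊆ seqVals u := by
  intro x hx
  rcases hx with hx | hx
  · exact Or.inl (List.mem_filter.1 hx).1
  · exact Or.inr (List.mem_filter.1 hx).1

theorem aux_matched_filter (V : Set (Option ℕ)) (u : List Label) (hu : seqMatched u) :
    seqMatched (u.filter (fun l => decide (l.val ∈ V))) := by
  intro x hx
  have h := List.mem_filter.1 hx
  exact List.mem_filter.2 ⟨hu x h.1, h.2⟩

theorem aux_stack_filter (V : Set (Option ℕ)) (u : List Label) (hu : Stack u) :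
    Stack (u.filter (fun l => decide (l.val ∈ V))) := by
  induction hu with
  | empty => exact Stack.empty
  | pushPop x u v _ hd hm hxu hxv ih =>
    rw [List.filter_append] at ih
    by_cases hx : (some x) ∈ V
    · have := Stack.pushPop x _ _ ih
        (hd.mono (aux_seqVals_filter _ u) (aux_seqVals_filter _ v)) (aux_matched_filter V u hm)
        (fun h => hxu (aux_seqVals_filter _ u h)) (fun h => hxv (aux_seqVals_filter _ v h))
      simpa [List.filter_cons, List.filter_append, Label.val, hx] using this
    · simpa [List.filter_cons, List.filter_append, Label.val, hx] using ih
  | push x u v _ hd hn hxu hxv ih =>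
    rw [List.filter_append] at ih
    by_cases hx : (some x) ∈ V
    · have := Stack.push x _ _ ih
        (hd.mono (aux_seqVals_filter _ u) (aux_seqVals_filter _ v))
        (fun h => hn (List.mem_filter.1 h).1)
        (fun h => hxu (aux_seqVals_filter _ u h)) (fun h => hxv (aux_seqVals_filter _ v h))
      simpa [List.filter_cons, List.filter_append, Label.val, hx] using this
    · simpa [List.filter_cons, List.filter_append, Label.val, hx] using ih
  | popEmpty u v _ hm ih =>
    rw [List.filter_append] at ih
    by_cases hx : (none : Option ℕ) ∈ V
    · have := Stack.popEmpty _ _ ih (aux_matched_filter V u hm)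
      simpa [List.filter_cons, List.filter_append, Label.val, hx] using this
    · simpa [List.filter_cons, List.filter_append, Label.val, hx] using ih

/-- Projection preserves linearizability: a differentiated history is linearizable iff
all of its projections are linearizable. -/
theorem linearizable_iff_all_projections (h : Finset Op) (hdiff : Differentiated h) :
    Linearizable h ↔ ∀ V : Set (Option ℕ), Linearizable (projOpt h V) := by
  constructor
  · rintro ⟨l, hn, hm, hp, hs⟩ V
    refine ⟨l.filter (fun o => decide (o.val ∈ V)), hn.filter _, ?_, hp.filter _, ?_⟩
    · intro o
      simp [projOpt, hm]
    · have := aux_stack_filter V _ hs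
      rw [List.filter_map] at this
      exact this
  · intro H
    have := H Set.univ
    simpa [projOpt] using this
end

section
/- For every natural number n ≥ 2 there exists a matched differentiated history h with exactly n distinct values and no pop(⊥) operations such that h is not linearizable with respect to the sequential stack specification, but for every value x of h, the history obtained by removing both operations on x from h is linearizable. In other words, stack linearizability has no small model property: unlinearizability cannot always be witnessed by a bounded-size sub-history. -/
attribute [local instance] Classical.propDecidable

theorem stack_noCross {l : List Label} (hl : Stack l) : ∀ a b : ℕ,
    ¬ [Label.push a, Label.push b, Label.pop (some a), Label.pop (some b)].Sublist l := by
  induction hl with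
  | empty => intro a b h; simp at h
  | pushPop x u v hs hd hm hu hv ih =>
    intro a b h
    simp only [seqVals, Set.mem_ofPred_eq, not_or] at hu hv
    have hd' : ∀ y, y ∈ seqVals u → y ∉ seqVals v := fun y h1 h2 =>
      Set.disjoint_left.mp hd h1 h2
    by_cases ha : a = x
    · subst ha
      rw [List.cons_sublist_cons, List.sublist_append_iff] at h
      obtain ⟨l1, l2, he, h1, h2⟩ := h
      have hbv : Label.pop (some b) ∈ v ∨ b = a := by
        by_contra hcon
        push Not at hcon
        rcases l1 with _ | ⟨p, _ | ⟨q, r⟩⟩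
        · simp at he; subst he
          have := h2.subset
          simp at this
          cases h2 with
          | cons _ h2 => have := h2.subset; simp at this; tauto
        · simp at he
          obtain ⟨rfl, rfl⟩ := he
          have := h2.subset
          simp at this; tauto
        · simp at he
          obtain ⟨rfl, rfl, he⟩ := he
          have := h1.subset
          simp at this; tauto
      have hbu : Label.push b ∈ u := by
        rcases l1 with _ | ⟨p, r⟩
        · simp at he; subst he
          cases h2 with
          | cons _ h2 => have := h2.subset; simp at this; tauto
        · simp at he
          obtain ⟨rfl, he⟩ := he
          exact h1.subset (by simp)
      rcases hbv with hbv | rfl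
      · exact hd' b (Or.inl hbu) (Or.inr hbv)
      · exact hu.1 hbu
    · by_cases hb : b = x
      · subst hb
        cases h with
        | cons _ h => have := h.subset; simp at this; tauto
        | cons_cons _ h => exact ha rfl
      · apply ih a b
        have hf := h.filter (fun o => decide (o ≠ Label.push x ∧ o ≠ Label.pop (some x)))
        have e : List.filter (fun o => decide (o ≠ Label.push x ∧ o ≠ Label.pop (some x))) (Label.push x :: (u ++ Label.pop (some x) :: v)) = u ++ v := by
          rw [List.filter_cons_of_neg (by simp), List.filter_append,
            List.filter_cons_of_neg (by simp), List.filter_eq_self.mpr, List.filter_eq_self.mpr]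
          · intro o ho
            simp only [decide_eq_true_eq]
            constructor <;> rintro rfl <;> tauto
          · intro o ho
            simp only [decide_eq_true_eq]
            constructor <;> rintro rfl <;> tauto
        rw [e] at hf
        simpa [ha, hb] using hf
  | push x u v hs hd hn hu hv ih =>
    intro a b h
    simp only [seqVals, Set.mem_ofPred_eq, not_or] at hu hv
    have hsub := h.subset
    simp at hsub
    have ha : a ≠ x := by rintro rfl; tauto
    have hb : b ≠ x := by rintro rfl; tauto
    apply ih a b
    have hf := h.filter (fun o => decide (o ≠ Label.push x))
    have e : List.filter (fun o => decide (o ≠ Label.push x)) (u ++ Label.push x :: v) = u ++ v := by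
      rw [List.filter_append,
        List.filter_cons_of_neg (by simp), List.filter_eq_self.mpr, List.filter_eq_self.mpr]
      · intro o ho
        simp only [decide_eq_true_eq]
        rintro rfl; tauto
      · intro o ho
        simp only [decide_eq_true_eq]
        rintro rfl; tauto
    rw [e] at hf
    simpa [ha, hb] using hf
  | popEmpty u v hs hm ih =>
    intro a b h
    apply ih a b
    have hf := h.filter (fun o => decide (o ≠ Label.pop none))
    have hg : (List.filter (fun o => decide (o ≠ Label.pop none)) (u ++ Label.pop none :: v)).Sublist (u ++ v) := by
      rw [List.filter_append, List.filter_cons_of_neg (by simp)]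
      exact List.filter_sublist.append List.filter_sublist
    simpa using hf.trans hg

theorem stack_nest (A : List ℕ) (w : List Label) (hw : Stack w) (hA : A.Nodup)
    (hd : ∀ a ∈ A, a ∉ seqVals w) :
    Stack (A.map Label.push ++ A.reverse.map (fun i => Label.pop (some i)) ++ w) := by
  induction A with
  | nil => simpa using hw
  | cons a A ih =>
    rw [List.nodup_cons] at hA
    have := ih hA.2 (fun b hb => hd b (by simp [hb]))
    have h2 := Stack.pushPop a (A.map Label.push ++ A.reverse.map (fun i => Label.pop (some i))) w
      this ?_ ?_ ?_ (hd a (by simp))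
    · simpa using h2
    · rw [Set.disjoint_left]
      intro b hb
      apply hd
      simp [seqVals] at hb ⊢
      tauto
    · intro b; simp
    · simp [seqVals]; exact hA.1

/-- push operations of the counterexample -/
noncomputable def opP (k i : ℕ) : Op where
  label := Label.push i
  call := if i = k + 1 then 3 else 0
  ret := 2 * i + 2
  call_lt_ret := by
    split_ifs with h
    · subst h; push_cast; have : (0:ℝ) ≤ k := by positivity
      linarith
    · positivity

/-- pop operations of the counterexample -/
noncomputable def opQ (k i : ℕ) : Op where
  label := Label.pop (some i)
  call := 2 * i + 5
  ret := if i < k + 1 then 2 * k + 6 else 2 * i + 6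
  call_lt_ret := by
    split_ifs with h
    · have : (i:ℝ) ≤ k := by exact_mod_cast Nat.lt_succ_iff.mp h
      linarith
    · linarith

/-- the counterexample -/
noncomputable def hist (k : ℕ) : Finset Op :=
  (Finset.range (k+2)).image (opP k) ∪ (Finset.range (k+2)).image (opQ k)

theorem mem_hist {k : ℕ} {o : Op} :
    o ∈ hist k ↔ ∃ i < k + 2, o = opP k i ∨ o = opQ k i := by
  simp only [hist, Finset.mem_union, Finset.mem_image, Finset.mem_range]
  constructor
  · rintro (⟨i, hi, rfl⟩ | ⟨i, hi, rfl⟩)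
    · exact ⟨i, hi, Or.inl rfl⟩
    · exact ⟨i, hi, Or.inr rfl⟩
  · rintro ⟨i, hi, rfl | rfl⟩
    · exact Or.inl ⟨i, hi, rfl⟩
    · exact Or.inr ⟨i, hi, rfl⟩

theorem hist_not_lin (k : ℕ) : ¬ Linearizable (hist k) := by
  rintro ⟨l, hnd, hmem, hpw, hst⟩
  have hin : ∀ o ∈ hist k, ∃ n : Fin l.length, l[n] = o := by
    intro o ho
    obtain ⟨n, hn, h⟩ := List.mem_iff_getElem.mp ((hmem o).mpr ho)
    exact ⟨⟨n, hn⟩, h⟩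
  have hP : ∀ i : ℕ, ∃ n : Fin l.length, i < k + 2 → l[n] = opP k i := by
    intro i
    by_cases hi : i < k + 2
    · obtain ⟨n, hn⟩ := hin _ (mem_hist.mpr ⟨i, hi, Or.inl rfl⟩)
      exact ⟨n, fun _ => hn⟩
    · obtain ⟨n, hn⟩ := hin _ (mem_hist.mpr ⟨0, by omega, Or.inl rfl⟩)
      exact ⟨n, fun h => absurd h hi⟩
  have hQ : ∀ i : ℕ, ∃ n : Fin l.length, i < k + 2 → l[n] = opQ k i := by
    intro i
    by_cases hi : i < k + 2
    · obtain ⟨n, hn⟩ := hin _ (mem_hist.mpr ⟨i, hi, Or.inr rfl⟩)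
      exact ⟨n, fun _ => hn⟩
    · obtain ⟨n, hn⟩ := hin _ (mem_hist.mpr ⟨0, by omega, Or.inl rfl⟩)
      exact ⟨n, fun h => absurd h hi⟩
  choose p hp using hP
  choose q hq using hQ
  have hlt : ∀ a b : Fin l.length, (l[a]).ret < (l[b]).call → a < b := by
    intro a b h
    by_contra hc
    rcases lt_or_eq_of_le (not_lt.mp hc) with h1 | h1
    · exact List.pairwise_iff_getElem.mp hpw b a b.2 a.2 h1 h
    · subst h1
      exact absurd (l[b]).call_lt_ret (not_lt.mpr h.le)
  have hcross : ∀ i < k + 1, p i < p (k+1) → q i < p (k+1) := by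
    intro i hi h
    by_contra hc
    have h1 : p (k+1) < q i := by
      refine lt_of_le_of_ne (not_lt.mp hc) ?_
      intro he
      have e1 := hp (k+1) (by omega)
      rw [he, hq i (by omega)] at e1
      have := congrArg Op.label e1
      simp [opP, opQ] at this
    have h2 : q i < q (k+1) := by
      apply hlt
      rw [hq i (by omega), hq (k+1) (by omega)]
      simp only [opQ, hi, if_true]
      push_cast; linarith
    have hs := List.map_getElem_sublist (l := l) (is := [p i, p (k+1), q i, q (k+1)])
      (by simp; exact ⟨⟨h, h.trans h1, h.trans (h1.trans h2)⟩, ⟨h1, h1.trans h2⟩, h2⟩)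
    have hs' := hs.map Op.label
    refine stack_noCross hst i (k+1) ?_
    have e1 := hp i (by omega)
    have e2 := hq i (by omega)
    have e3 := hp (k+1) (by omega)
    have e4 := hq (k+1) (by omega)
    simp only [List.map_cons, List.map_nil, e1, e2, e3, e4] at hs'
    exact hs'
  have key : ∀ i < k + 1, q i < p (k+1) := by
    intro i
    induction i with
    | zero =>
      intro hi
      apply hcross 0 hi
      apply hlt
      rw [hp 0 (by omega), hp (k+1) (by omega)]
      simp [opP]; norm_num
    | succ i ih =>
      intro hi
      apply hcross _ hi
      refine lt_trans ?_ (ih (by omega))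
      apply hlt
      rw [hp (i+1) (by omega), hq i (by omega)]
      simp [opP, opQ]; linarith
  have h1 := key k (by omega)
  have h2 : p (k+1) < q k := by
    apply hlt
    rw [hp (k+1) (by omega), hq k (by omega)]
    simp [opP, opQ]; linarith
  exact absurd h1 (not_lt.mpr h2.le)

/-- nested execution of a list of values -/
noncomputable def nest (k : ℕ) (A : List ℕ) : List Op :=
  A.map (opP k) ++ A.reverse.map (opQ k)

theorem nest_labels (k : ℕ) (A : List ℕ) : (nest k A).map Op.label =
    A.map Label.push ++ A.reverse.map (fun i => Label.pop (some i)) := by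
  simp [nest, Function.comp_def, opP, opQ]

theorem mem_nest {k : ℕ} {A : List ℕ} {o : Op} :
    o ∈ nest k A ↔ ∃ i ∈ A, o = opP k i ∨ o = opQ k i := by
  simp only [nest, List.mem_append, List.mem_map, List.mem_reverse]
  constructor
  · rintro (⟨i, hi, rfl⟩ | ⟨i, hi, rfl⟩)
    · exact ⟨i, hi, Or.inl rfl⟩
    · exact ⟨i, hi, Or.inr rfl⟩
  · rintro ⟨i, hi, rfl | rfl⟩
    · exact Or.inl ⟨i, hi, rfl⟩
    · exact Or.inr ⟨i, hi, rfl⟩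

theorem opQ_ret_ge (k i : ℕ) : 2 * (k:ℝ) + 6 ≤ (opQ k i).ret := by
  simp only [opQ]
  split_ifs with h
  · exact le_rfl
  · have : (k:ℝ) + 1 ≤ i := by exact_mod_cast not_lt.mp h
    linarith

theorem opP_call_le (k i : ℕ) : (opP k i).call ≤ 3 := by
  simp only [opP]; split_ifs <;> norm_num

theorem nest_pairwise (k : ℕ) (A : List ℕ)
    (h : A.Pairwise (fun a b => (a = k + 1 → 1 ≤ b) ∧ b ≤ k)) :
    (nest k A).Pairwise (fun o1 o2 => ¬ o2.ret < o1.call) := by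
  rw [nest, List.pairwise_append, List.pairwise_map, List.pairwise_map, List.pairwise_reverse]
  refine ⟨h.imp ?_, h.imp ?_, ?_⟩
  · intro a b ⟨h1, h2⟩
    simp only [opP, not_lt]
    split_ifs with h
    · have : (1:ℝ) ≤ b := by exact_mod_cast h1 h
      linarith
    · positivity
  · intro a b ⟨h1, h2⟩
    have := opQ_ret_ge k a
    have h3 : (b:ℝ) ≤ k := by exact_mod_cast h2
    simp only [not_lt]
    refine le_trans ?_ this
    simp only [opQ]; linarith
  · intro o1 ho1 o2 ho2
    simp only [List.mem_map] at ho1 ho2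
    obtain ⟨a, _, rfl⟩ := ho1
    obtain ⟨b, _, rfl⟩ := ho2
    have := opQ_ret_ge k b
    have h2 := opP_call_le k a
    have : (0:ℝ) ≤ k := by positivity
    rw [not_lt]; linarith

theorem lin_of_lists (k x : ℕ) (hx : x < k + 2) (A B : List ℕ) (hA : A.Nodup) (hB : B.Nodup)
    (hAB : ∀ i, (i ∈ A ∨ i ∈ B) ↔ (i < k + 2 ∧ i ≠ x))
    (hAx : ∀ i ∈ A, i < x) (hBx : ∀ i ∈ B, x < i)
    (hA2 : A.Pairwise (fun a b => (a = k + 1 → 1 ≤ b) ∧ b ≤ k))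
    (hB2 : B.Pairwise (fun a b => (a = k + 1 → 1 ≤ b) ∧ b ≤ k)) :
    Linearizable (removeVal (hist k) x) := by
  have hstk : Stack ((nest k A ++ nest k B).map Op.label) := by
    rw [List.map_append, nest_labels, nest_labels]
    have := stack_nest B [] Stack.empty hB (by simp [seqVals])
    rw [List.append_nil] at this
    apply stack_nest A _ this hA
    intro a ha hab
    have : a ∈ B := by simpa [seqVals] using hab
    have := hBx a this
    have := hAx a ha
    omega
  refine ⟨nest k A ++ nest k B, ?_, ?_, ?_, hstk⟩
  · have hAB' : (A ++ B).Nodup := by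
      rw [List.nodup_append]
      refine ⟨hA, hB, fun a ha b hb => ?_⟩
      have := hBx b hb
      have := hAx a ha
      omega
    apply List.Nodup.of_map Op.label
    rw [List.map_append, nest_labels, nest_labels]
    have i1 : Function.Injective Label.push := fun a b h => by injection h
    have i2 : Function.Injective (fun i => Label.pop (some i)) := fun a b h => by simpa using h
    have hn : ∀ C : List ℕ, C.Nodup →
        (C.map Label.push ++ C.reverse.map (fun i => Label.pop (some i))).Nodup := by
      intro C hC
      rw [List.nodup_append]
      refine ⟨hC.map i1, (List.nodup_reverse.mpr hC).map i2, ?_⟩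
      intro a ha b hb
      simp only [List.mem_map] at ha hb
      obtain ⟨_, _, rfl⟩ := ha
      obtain ⟨_, _, rfl⟩ := hb
      simp
    rw [List.nodup_append]
    refine ⟨hn A hA, hn B hB, ?_⟩
    rintro a ha b hb rfl
    simp only [List.mem_append, List.mem_map, List.mem_reverse] at ha hb
    obtain ⟨i, hi, rfl⟩ | ⟨i, hi, rfl⟩ := ha <;> obtain ⟨j, hj, e⟩ | ⟨j, hj, e⟩ := hb <;> simp at e
    all_goals
      have := hBx j hj
      have := hAx i hi
      omega
  · intro o
    rw [List.mem_append, mem_nest, mem_nest, removeVal, Finset.mem_filter, mem_hist]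
    constructor
    · rintro (⟨i, hi, h⟩ | ⟨i, hi, h⟩)
      all_goals
        obtain ⟨h1, h2⟩ := (hAB i).mp (by tauto)
        refine ⟨⟨i, h1, h⟩, ?_⟩
        rcases h with rfl | rfl <;> simpa [Op.val, opP, opQ, Label.val] using h2
    · rintro ⟨⟨i, hi, h⟩, hne⟩
      have : i ≠ x := by
        rcases h with rfl | rfl <;> simpa [Op.val, opP, opQ, Label.val] using hne
      rcases (hAB i).mpr ⟨hi, this⟩ with h' | h'
      · exact Or.inl ⟨i, h', h⟩
      · exact Or.inr ⟨i, h', h⟩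
  · rw [List.pairwise_append]
    refine ⟨nest_pairwise k A hA2, nest_pairwise k B hB2, ?_⟩
    intro o1 h1 o2 h2
    rw [mem_nest] at h1 h2
    obtain ⟨a, ha, h1⟩ := h1
    obtain ⟨b, hb, h2⟩ := h2
    have hax := hAx a ha
    have hbx := hBx b hb
    have hbk := ((hAB b).mp (Or.inr hb)).1
    have hab : (a:ℝ) + 2 ≤ b := by exact_mod_cast (by omega : a + 2 ≤ b)
    have hbk' : (b:ℝ) ≤ k + 1 := by exact_mod_cast Nat.lt_succ_iff.mp hbk
    have ha0 : (0:ℝ) ≤ a := by positivity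
    have hq := opQ_ret_ge k b
    have hp := opP_call_le k a
    have e1 : (opP k b).ret = 2 * b + 2 := rfl
    have e2 : (opQ k a).call = 2 * a + 5 := rfl
    rw [not_lt]
    rcases h1 with rfl | rfl <;> rcases h2 with rfl | rfl <;> linarith

theorem hist_vals (k : ℕ) : hVals (hist k) = ↑(Finset.range (k+2)) := by
  ext x
  simp only [hVals, Set.mem_ofPred_eq, Finset.coe_range, Set.mem_Iio]
  constructor
  · rintro ⟨o, ho, h⟩
    obtain ⟨i, hi, rfl | rfl⟩ := mem_hist.mp ho <;> simp [opP, opQ] at h <;> omega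
  · intro hx
    exact ⟨opP k x, mem_hist.mpr ⟨x, hx, Or.inl rfl⟩, Or.inl rfl⟩

/-- No small model property: for every `n ≥ 2` there is a matched differentiated
history with exactly `n` values and no pop(⊥) that is not linearizable, yet removing
(both operations on) any one of its values yields a linearizable history. -/
theorem no_small_model_property (n : ℕ) (hn : 2 ≤ n) :
    ∃ h : Finset Op, Differentiated h ∧ HMatched h ∧ NoPopEmpty h ∧
      (hVals h).ncard = n ∧
      ¬ Linearizable h ∧
      ∀ x ∈ hVals h, Linearizable (removeVal h x) := by
  obtain ⟨k, rfl⟩ : ∃ k, n = k + 2 := ⟨n - 2, by omega⟩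
  refine ⟨hist k, ⟨?_, ?_⟩, ?_, ?_, ?_, hist_not_lin k, ?_⟩
  · intro o1 h1 o2 h2 x e1 e2
    obtain ⟨i, hi, rfl | rfl⟩ := mem_hist.mp h1 <;>
    obtain ⟨j, hj, rfl | rfl⟩ := mem_hist.mp h2 <;> simp [opP, opQ] at e1 e2
    subst e1 e2; rfl
  · intro o1 h1 o2 h2 x e1 e2
    obtain ⟨i, hi, rfl | rfl⟩ := mem_hist.mp h1 <;>
    obtain ⟨j, hj, rfl | rfl⟩ := mem_hist.mp h2 <;> simp [opP, opQ] at e1 e2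
    subst e1 e2; rfl
  · rintro x ⟨o, ho, e⟩
    obtain ⟨i, hi, rfl | rfl⟩ := mem_hist.mp ho <;> simp [opP, opQ] at e
    subst e
    exact ⟨opQ k i, mem_hist.mpr ⟨i, hi, Or.inr rfl⟩, rfl⟩
  · intro o ho
    obtain ⟨i, hi, rfl | rfl⟩ := mem_hist.mp ho <;> simp [opP, opQ]
  · rw [hist_vals, Set.ncard_coe_finset, Finset.card_range]
  · intro x hx
    rw [hist_vals] at hx
    have hx : x < k + 2 := by simpa using hx
    have hr : (List.range x).Pairwise (fun a b => (a = k + 1 → 1 ≤ b) ∧ b ≤ k) := by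
      rw [List.pairwise_iff_getElem]
      intro i j hi hj hij
      simp at hi hj ⊢
      omega
    by_cases hxk : x = k + 1
    · apply lin_of_lists k x hx (List.range x) [] List.nodup_range List.nodup_nil
      · intro i; simp; omega
      · simp
      · simp
      · exact hr
      · simp
    · apply lin_of_lists k x hx (List.range x) ((k+1) :: List.range' (x+1) (k - x))
        List.nodup_range
      · rw [List.nodup_cons]
        refine ⟨?_, List.nodup_range'⟩
        simp [List.mem_range'_1]; omega
      · intro i; simp [List.mem_range'_1]; omega
      · simp
      · intro i; simp [List.mem_range'_1]; omega
      · exact hr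
      · rw [List.pairwise_cons]
        constructor
        · intro b; simp [List.mem_range'_1]; omega
        · rw [List.pairwise_iff_getElem]
          intro i j hi hj hij
          simp at hi hj ⊢
          omega
end
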